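/- Assume π, every entry of p, and all the emission weights f_0, f_1,…,f_T are strictly positive, so that W := Σ_{r ∈ S^{T+1}} w(r) > 0 and all filtered and prediction probabilities below are well defined and positive on reachable states. Then the smoothed probabilities satisfy the backward recursion: γ^(T)_n(i) = α̂^(T)_n(i) for all i ∈ S and n ∈ S^(T); and for t = T−1, T−2, …, 0, all n ∈ S^(t) and all i ∈ S: γ^(t)_n(i) = α̂^(t)_n(i) · Σ_{j ∈ S} p_{ij} · γ^(t+1)_{n*}(j) / φ^(t+1)_{n*}(j), where n* = n + 1 if i ∈ S_AR^c and n* = n^{(−i)} + 1 if i ∈ S_AR. -/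

import Mathlib

open Finset

namespace MRS

/-- Time since the last visit to the regime with value `j` strictly before time `t`;
equals `t + 1` if that regime was never visited before time `t`. -/
def counter {M : ℕ} (r : ℕ → Fin M) (t : ℕ) (j : ℕ) : ℕ :=
  if h : ((Finset.range t).filter fun τ => (r τ : ℕ) = j).Nonempty then
    t - ((Finset.range t).filter fun τ => (r τ : ℕ) = j).max' h
  else t + 1

/-- Counter vector for the `k` AR(1) regimes (the regimes with values `0, …, k-1`). -/
def nvec {M : ℕ} (k : ℕ) (r : ℕ → Fin M) (t : ℕ) : Fin k → ℕ :=
  fun j => counter r t (j : ℕ)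

/-- Extend a finite path to a stream (values beyond the end repeat the last value;
they are never used for counters up to time `t`). -/
def pad {M t : ℕ} (r : Fin (t + 1) → Fin M) : ℕ → Fin M :=
  fun s => r ⟨min s t, Nat.lt_succ_of_le (min_le_right s t)⟩

/-- The set `S^(t)` of possible counter vectors at time `t`: every entry lies in
`{1, …, t+1}`, at most `min t k` entries differ from `t+1`, and the entries different
from `t+1` are pairwise distinct. -/
def Sset (k t : ℕ) : Finset (Fin k → ℕ) :=
  (Fintype.piFinset fun _ : Fin k => Finset.Icc 1 (t + 1)).filter fun n =>
    (Finset.univ.filter fun j => n j ≠ t + 1).card ≤ min t k ∧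
      ∀ i j : Fin k, i ≠ j → n i ≠ t + 1 → n j ≠ t + 1 → n i ≠ n j

/-- Weight of a (partial) path `r = (r_0, …, r_t)`:
`π_{r_0} f_0(r_0) ∏_{s=1}^t p_{r_{s-1} r_s} f_s(r_s, n_s(r))`. -/
noncomputable def wpath {M : ℕ} (k : ℕ) (pi0 : Fin M → ℝ) (p : Fin M → Fin M → ℝ)
    (f0 : Fin M → ℝ) (f : ℕ → Fin M → (Fin k → ℕ) → ℝ) {t : ℕ}
    (r : Fin (t + 1) → Fin M) : ℝ :=
  pi0 (r 0) * f0 (r 0) *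
    ∏ s ∈ Finset.Icc 1 t, p (pad r (s - 1)) (pad r s) * f s (pad r s) (nvec k (pad r) s)

/-- Forward quantity `α^(t)_n(j)`: total weight of partial paths ending in regime `j`
at time `t` with counter vector `n`. -/
noncomputable def alpha {M : ℕ} (k : ℕ) (pi0 : Fin M → ℝ) (p : Fin M → Fin M → ℝ)
    (f0 : Fin M → ℝ) (f : ℕ → Fin M → (Fin k → ℕ) → ℝ)
    (t : ℕ) (n : Fin k → ℕ) (j : Fin M) : ℝ :=
  ∑ r ∈ Finset.univ.filter
      (fun r : Fin (t + 1) → Fin M => r (Fin.last t) = j ∧ nvec k (pad r) t = n),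
    wpath k pi0 p f0 f r

end MRS

namespace MRS

/-- Total forward mass at time `t`. -/
noncomputable def Asum {M : ℕ} (k : ℕ) (pi0 : Fin M → ℝ) (p : Fin M → Fin M → ℝ)
    (f0 : Fin M → ℝ) (f : ℕ → Fin M → (Fin k → ℕ) → ℝ) (t : ℕ) : ℝ :=
  ∑ n ∈ Sset k t, ∑ i : Fin M, alpha k pi0 p f0 f t n i

/-- Filtered probability `α̂^(t)_n(j) = α^(t)_n(j) / (∑_{ℓ} ∑_{n'} α^(t)_{n'}(ℓ))`. -/
noncomputable def alphaHat {M : ℕ} (k : ℕ) (pi0 : Fin M → ℝ) (p : Fin M → Fin M → ℝ)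
    (f0 : Fin M → ℝ) (f : ℕ → Fin M → (Fin k → ℕ) → ℝ)
    (t : ℕ) (n : Fin k → ℕ) (j : Fin M) : ℝ :=
  alpha k pi0 p f0 f t n j / Asum k pi0 p f0 f t

/-- Prediction probability `φ^(t)_n(j)`, defined piecewise according to whether some
counter in `n` equals `1` (then the previous regime was the corresponding AR regime)
or not (then the previous regime was not an AR regime). -/
noncomputable def phi {M : ℕ} (k : ℕ) (hkM : k ≤ M) (pi0 : Fin M → ℝ)
    (p : Fin M → Fin M → ℝ) (f0 : Fin M → ℝ) (f : ℕ → Fin M → (Fin k → ℕ) → ℝ)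
    (t : ℕ) (n : Fin k → ℕ) (j : Fin M) : ℝ :=
  if h : ∃ ℓ : Fin k, n ℓ = 1 then
    p (Fin.castLE hkM h.choose) j *
      ∑ m ∈ Finset.Icc 1 t,
        alphaHat k pi0 p f0 f (t - 1)
          (fun i => n i - 1 + if i = h.choose then m else 0) (Fin.castLE hkM h.choose)
  else
    ∑ i ∈ Finset.univ.filter (fun i : Fin M => k ≤ (i : ℕ)),
      p i j * alphaHat k pi0 p f0 f (t - 1) (fun ℓ => n ℓ - 1) i

/-- Smoothed probability `γ^(t)_n(i) = P(r_t = i, n_t(r) = n)` under the path measure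
`P({r}) = w(r)/W`. -/
noncomputable def gamma {M : ℕ} (k : ℕ) (pi0 : Fin M → ℝ) (p : Fin M → Fin M → ℝ)
    (f0 : Fin M → ℝ) (f : ℕ → Fin M → (Fin k → ℕ) → ℝ) (T : ℕ)
    (t : ℕ) (n : Fin k → ℕ) (i : Fin M) : ℝ :=
  (∑ r ∈ Finset.univ.filter (fun r : Fin (T + 1) → Fin M =>
      pad r t = i ∧ nvec k (pad r) t = n), wpath k pi0 p f0 f r) /
    ∑ r : Fin (T + 1) → Fin M, wpath k pi0 p f0 f r

end MRS

namespace MRS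

/-- Counter update. -/
def star {M k : ℕ} (x : Fin M) (n : Fin k → ℕ) : Fin k → ℕ :=
  fun ℓ => (if (ℓ : ℕ) = (x : ℕ) ∧ (x : ℕ) < k then 0 else n ℓ) + 1

lemma counter_spec {M : ℕ} (r : ℕ → Fin M) (t j : ℕ) :
    (counter r t j = t + 1 ∧ ∀ τ < t, (r τ : ℕ) ≠ j) ∨
    (1 ≤ counter r t j ∧ counter r t j ≤ t ∧ (r (t - counter r t j) : ℕ) = j ∧
      ∀ τ < t, (r τ : ℕ) = j → τ ≤ t - counter r t j) := by
  unfold counter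
  split_ifs with h
  · right
    have h1 := Finset.max'_mem _ h
    have h2 := fun τ hτ => Finset.le_max' ((Finset.range t).filter fun τ => (r τ : ℕ) = j) τ hτ
    set m := ((Finset.range t).filter fun τ => (r τ : ℕ) = j).max' h
    simp only [Finset.mem_filter, Finset.mem_range] at h1 h2
    have e : t - (t - m) = m := by omega
    rw [e]
    exact ⟨by omega, by omega, h1.2, fun τ a b => h2 τ ⟨a, b⟩⟩
  · left
    refine ⟨rfl, fun τ hτ hj => h ⟨τ, ?_⟩⟩
    simp [hτ, hj]

lemma counter_succ {M : ℕ} (r : ℕ → Fin M) (t j : ℕ) :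
    counter r (t + 1) j = (if j = (r t : ℕ) then 0 else counter r t j) + 1 := by
  rcases counter_spec r (t + 1) j with ⟨h1, h2⟩ | ⟨h1, h2, h3, h4⟩
  · have := h2 t (by omega)
    rw [if_neg (Ne.symm this), h1]
    rcases counter_spec r t j with ⟨g1, g2⟩ | ⟨g1, g2, g3, g4⟩
    · omega
    · exact absurd g3 (h2 _ (by omega))
  · split_ifs with hj
    · have := h4 t (by omega) hj.symm
      omega
    · have hne : counter r (t + 1) j ≠ 1 := by
        intro h
        rw [h] at h3
        exact hj h3.symm
      rcases counter_spec r t j with ⟨g1, g2⟩ | ⟨g1, g2, g3, g4⟩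
      · exact absurd h3 (g2 _ (by omega))
      · have a := g4 _ (by omega) h3
        have b := h4 _ (by omega) g3
        omega

lemma nvec_succ {M k : ℕ} (r : ℕ → Fin M) (t : ℕ) :
    nvec k r (t + 1) = star (r t) (nvec k r t) := by
  funext ℓ
  have := ℓ.2
  simp only [nvec, star, counter_succ]
  congr 1
  by_cases h : (ℓ : ℕ) = (r t : ℕ)
  · rw [if_pos h, if_pos ⟨h, by omega⟩]
  · rw [if_neg h, if_neg (fun h' => h h'.1)]

lemma nvec_congr {M k : ℕ} (r r' : ℕ → Fin M) (t : ℕ) (h : ∀ s < t, r s = r' s) :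
    nvec k r t = nvec k r' t := by
  induction t with
  | zero => funext ℓ; simp [nvec, counter]
  | succ t ih =>
    rw [nvec_succ, nvec_succ, ih (fun s hs => h s (by omega)), h t (by omega)]

lemma nvec_one_le {M k : ℕ} (r : ℕ → Fin M) (t : ℕ) (ℓ : Fin k) : 1 ≤ nvec k r t ℓ := by
  rcases counter_spec r t ℓ with ⟨h1, h2⟩ | ⟨h1, h2, h3, h4⟩ <;> simp only [nvec] <;> omega

lemma nvec_le {M k : ℕ} (r : ℕ → Fin M) (t : ℕ) (ℓ : Fin k) : nvec k r t ℓ ≤ t + 1 := by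
  rcases counter_spec r t ℓ with ⟨h1, h2⟩ | ⟨h1, h2, h3, h4⟩ <;> simp only [nvec] <;> omega

lemma nvec_mem {M k : ℕ} (r : ℕ → Fin M) (t : ℕ) : nvec k r t ∈ Sset k t := by
  have key : ∀ i j : Fin k, nvec k r t i ≠ t + 1 → nvec k r t j ≠ t + 1 →
      nvec k r t i = nvec k r t j → i = j := by
    intro i j hi hj e
    simp only [nvec] at hi hj e
    rcases counter_spec r t i with ⟨h1, h2⟩ | ⟨h1, h2, h3, h4⟩
    · exact absurd h1 hi
    rcases counter_spec r t j with ⟨g1, g2⟩ | ⟨g1, g2, g3, g4⟩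
    · exact absurd g1 hj
    rw [e, g3] at h3
    exact Fin.ext h3.symm
  unfold Sset
  rw [Finset.mem_filter, Fintype.mem_piFinset]
  refine ⟨fun ℓ => Finset.mem_Icc.2 ⟨nvec_one_le r t ℓ, nvec_le r t ℓ⟩, le_min ?_ ?_, ?_⟩
  · have : (Finset.univ.filter fun j => nvec k r t j ≠ t + 1).card ≤ (Finset.Icc 1 t).card := by
      apply Finset.card_le_card_of_injOn (nvec k r t)
      · intro j hj
        have hj' : nvec k r t j ≠ t + 1 := by simpa using hj
        have h1 := nvec_one_le r t j
        have h2 := nvec_le r t j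
        simp only [Finset.coe_Icc, Set.mem_Icc]
        omega
      · intro i hi j hj e
        exact key i j (by simpa using hi) (by simpa using hj) e
    simpa using this
  · exact (Finset.card_le_univ _).trans (by simp)
  · intro i j hij hi hj e
    exact hij (key i j hi hj e)

lemma pad_last {M t : ℕ} (r : Fin (t + 1) → Fin M) : pad r t = r (Fin.last t) := by
  simp only [pad, min_self]; rfl

lemma pad_snoc_lt {M t : ℕ} (r : Fin (t + 1) → Fin M) (x : Fin M) (s : ℕ) (hs : s ≤ t) :
    pad (t := t + 1) (Fin.snoc (α := fun _ => Fin M) r x) s = pad r s := by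
  have e : (⟨min s (t + 1), Nat.lt_succ_of_le (min_le_right s (t + 1))⟩ : Fin (t + 1 + 1))
      = Fin.castSucc ⟨min s t, Nat.lt_succ_of_le (min_le_right s t)⟩ := by
    ext; simp; omega
  simp only [pad, e, Fin.snoc_castSucc]

lemma pad_snoc_last {M t : ℕ} (r : Fin (t + 1) → Fin M) (x : Fin M) :
    pad (t := t + 1) (Fin.snoc (α := fun _ => Fin M) r x) (t + 1) = x := by
  rw [pad_last, Fin.snoc_last]

lemma nvec_pad_snoc {M k t : ℕ} (r : Fin (t + 1) → Fin M) (x : Fin M) (s : ℕ)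
    (hs : s ≤ t + 1) :
    nvec k (pad (t := t + 1) (Fin.snoc (α := fun _ => Fin M) r x)) s = nvec k (pad r) s :=
  nvec_congr _ _ _ fun s' hs' => pad_snoc_lt r x s' (by omega)

section
variable {M : ℕ} (k : ℕ) (pi0 : Fin M → ℝ) (p : Fin M → Fin M → ℝ)
    (f0 : Fin M → ℝ) (f : ℕ → Fin M → (Fin k → ℕ) → ℝ)

lemma wpath_snoc {t : ℕ} (r : Fin (t + 1) → Fin M) (x : Fin M) :
    wpath k pi0 p f0 f (t := t + 1) (Fin.snoc (α := fun _ => Fin M) r x) =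
      wpath k pi0 p f0 f r *
        (p (pad r t) x * f (t + 1) x (star (pad r t) (nvec k (pad r) t))) := by
  unfold wpath
  rw [Finset.prod_Icc_succ_top (by omega), ← mul_assoc]
  have e0 : (Fin.snoc (α := fun _ => Fin M) r x : Fin (t + 1 + 1) → Fin M) 0 = r 0 := by
    have : (0 : Fin (t + 1 + 1)) = Fin.castSucc 0 := rfl
    rw [this, Fin.snoc_castSucc]
  rw [e0, pad_snoc_last, Nat.add_sub_cancel, pad_snoc_lt _ _ _ le_rfl, nvec_pad_snoc _ _ _ le_rfl,
    nvec_succ]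
  congr 2
  apply Finset.prod_congr rfl
  intro s hs
  rw [Finset.mem_Icc] at hs
  rw [pad_snoc_lt _ _ _ (by omega), pad_snoc_lt _ _ _ (by omega), nvec_pad_snoc _ _ _ (by omega)]

lemma sum_snoc {t : ℕ} (F : (Fin (t + 1 + 1) → Fin M) → ℝ) :
    ∑ r, F r = ∑ r : Fin (t + 1) → Fin M, ∑ x, F (Fin.snoc (α := fun _ => Fin M) r x) := by
  rw [← (Fin.snocEquiv (fun _ : Fin (t + 1 + 1) => Fin M)).sum_comp, Fintype.sum_prod_type,
    Finset.sum_comm]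
  rfl

/-- One-step backward operator. -/
noncomputable def Q (s : ℕ) (h : Fin M → (Fin k → ℕ) → ℝ) : Fin M → (Fin k → ℕ) → ℝ :=
  fun x n => ∑ j, p x j * f (s + 1) j (star x n) * h j (star x n)

/-- Iterated backward operator. -/
noncomputable def K (h : Fin M → (Fin k → ℕ) → ℝ) : ℕ → ℕ → Fin M → (Fin k → ℕ) → ℝ
  | 0, _ => h
  | d + 1, t => Q k p f t (K h d (t + 1))

lemma K_succ (d : ℕ) : ∀ (h : Fin M → (Fin k → ℕ) → ℝ) (t : ℕ),
    K k p f h (d + 1) t = K k p f (Q k p f (t + d) h) d t := by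
  induction d with
  | zero => intro h t; rfl
  | succ d ih =>
    intro h t
    rw [K, ih h (t + 1), K]
    have : t + 1 + d = t + (d + 1) := by omega
    rw [this]

lemma alpha_eq (t : ℕ) (n : Fin k → ℕ) (i : Fin M) :
    alpha k pi0 p f0 f t n i = ∑ r : Fin (t + 1) → Fin M,
      if pad r t = i ∧ nvec k (pad r) t = n then wpath k pi0 p f0 f r else 0 := by
  unfold alpha
  rw [Finset.sum_filter]
  simp only [pad_last]

lemma sum_K (t : ℕ) (n : Fin k → ℕ) (i : Fin M) (d : ℕ) :
    ∀ h : Fin M → (Fin k → ℕ) → ℝ,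
    (∑ r : Fin (t + d + 1) → Fin M, if pad r t = i ∧ nvec k (pad r) t = n then
      wpath k pi0 p f0 f r * h (pad r (t + d)) (nvec k (pad r) (t + d)) else 0) =
      alpha k pi0 p f0 f t n i * K k p f h d t i n := by
  induction d with
  | zero =>
    intro h
    rw [alpha_eq, Finset.sum_mul]
    apply Finset.sum_congr rfl
    intro r _
    simp only [Nat.add_zero]
    split_ifs with hc
    · rw [hc.1, hc.2]; rfl
    · simp
  | succ d ih =>
    intro h
    rw [K_succ, ← ih]
    refine (sum_snoc (t := t + d) _).trans ?_
    apply Finset.sum_congr rfl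
    intro r _
    have e1 : t + (d + 1) = t + d + 1 := rfl
    have e2 := fun x => pad_snoc_lt r x t (by omega)
    have e3 := fun x => nvec_pad_snoc (k := k) r x t (by omega)
    simp only [e1, e2, e3, wpath_snoc,
      pad_snoc_last, nvec_pad_snoc _ _ (t + d + 1) le_rfl, nvec_succ]
    split_ifs with hc
    · rw [Q, Finset.mul_sum]
      apply Finset.sum_congr rfl
      intro j _
      ring
    · simp

lemma gamma_eq (t d : ℕ) (n : Fin k → ℕ) (i : Fin M) :
    gamma k pi0 p f0 f (t + d) t n i = alpha k pi0 p f0 f t n i *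
      K k p f (fun _ _ => 1) d t i n /
        ∑ r : Fin (t + d + 1) → Fin M, wpath k pi0 p f0 f r := by
  unfold gamma
  rw [← sum_K, Finset.sum_filter]
  simp only [mul_one]

lemma Asum_eq (t : ℕ) :
    Asum k pi0 p f0 f t = ∑ r : Fin (t + 1) → Fin M, wpath k pi0 p f0 f r := by
  unfold Asum
  simp only [alpha_eq]
  rw [Finset.sum_congr rfl (fun n _ => Finset.sum_comm), Finset.sum_comm]
  apply Finset.sum_congr rfl
  intro r _
  rw [Finset.sum_eq_single_of_mem _ (nvec_mem (pad r) t)]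
  · simp
  · intro n _ hn
    simp [hn.symm]

/-- One-step transition mass. -/
noncomputable def Phi (t : ℕ) (N : Fin k → ℕ) (j : Fin M) : ℝ :=
  ∑ r : Fin (t + 1) → Fin M, if star (pad r t) (nvec k (pad r) t) = N then
    wpath k pi0 p f0 f r * p (pad r t) j else 0

lemma alpha_succ (t : ℕ) (N : Fin k → ℕ) (j : Fin M) :
    alpha k pi0 p f0 f (t + 1) N j = f (t + 1) j N * Phi k pi0 p f0 f t N j := by
  rw [alpha_eq, sum_snoc, Phi, Finset.mul_sum]
  apply Finset.sum_congr rfl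
  intro r _
  simp only [pad_snoc_last, nvec_pad_snoc _ _ (t + 1) le_rfl, nvec_succ, wpath_snoc]
  by_cases h : star (pad r t) (nvec k (pad r) t) = N
  · simp only [h, and_true, if_true]
    rw [Finset.sum_ite_eq' Finset.univ j]
    simp only [Finset.mem_univ, if_true]
    ring
  · simp [h]

lemma star_eq_iff_AR {x i : Fin M} {m n : Fin k → ℕ} (hm : ∀ ℓ, 1 ≤ m ℓ)
    (ℓ : Fin k) (hi : (ℓ : ℕ) = i) :
    star x m = star i n ↔ x = i ∧ ∀ ℓ', ℓ' ≠ ℓ → m ℓ' = n ℓ' := by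
  have hik := ℓ.2
  constructor
  · intro h
    have h1 := congrFun h ℓ
    have hx : x = i := by
      by_contra hne
      have : (ℓ : ℕ) ≠ x := fun h' => hne (Fin.ext (by omega))
      have := hm ℓ
      simp only [star] at h1
      rw [if_neg (by tauto), if_pos ⟨hi, by omega⟩] at h1
      omega
    refine ⟨hx, fun ℓ' hne => ?_⟩
    have h2 := congrFun h ℓ'
    have : (ℓ' : ℕ) ≠ i := fun h' => hne (Fin.ext (by omega))
    simp only [star, hx] at h2
    rw [if_neg (by tauto), if_neg (by tauto)] at h2
    omega
  · rintro ⟨rfl, h⟩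
    funext ℓ'
    simp only [star]
    by_cases he : ℓ' = ℓ
    · rw [if_pos ⟨by rw [he, hi], by omega⟩, if_pos ⟨by rw [he, hi], by omega⟩]
    · rw [h ℓ' he]

lemma star_eq_iff_not {x i : Fin M} {m n : Fin k → ℕ} (hn : ∀ ℓ, 1 ≤ n ℓ)
    (hi : k ≤ (i : ℕ)) :
    star x m = star i n ↔ k ≤ (x : ℕ) ∧ m = n := by
  constructor
  · intro h
    have hx : k ≤ (x : ℕ) := by
      by_contra hne
      have h1 := congrFun h ⟨x, by omega⟩
      simp only [star] at h1
      rw [if_pos ⟨by simp, by omega⟩, if_neg (by omega)] at h1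
      have := hn ⟨x, by omega⟩
      omega
    refine ⟨hx, funext fun ℓ => ?_⟩
    have h1 := congrFun h ℓ
    simp only [star] at h1
    rw [if_neg (by omega), if_neg (by omega)] at h1
    omega
  · rintro ⟨h, rfl⟩
    funext ℓ
    simp only [star]
    rw [if_neg (by omega), if_neg (by omega)]

lemma phi_eq (hkM : k ≤ M) (t : ℕ) (n : Fin k → ℕ) (hn : ∀ ℓ, 1 ≤ n ℓ) (i j : Fin M) :
    phi k hkM pi0 p f0 f (t + 1) (star i n) j =
      Phi k pi0 p f0 f t (star i n) j / Asum k pi0 p f0 f t := by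
  unfold phi
  split_ifs with h
  · have hs := h.choose_spec
    set ℓ := h.choose
    have hi : (ℓ : ℕ) = i := by
      by_contra hne
      simp only [star] at hs
      rw [if_neg (by tauto)] at hs
      have := hn ℓ
      omega
    have hc : Fin.castLE hkM ℓ = i := Fin.ext hi
    rw [hc, Nat.add_sub_cancel]
    simp only [alphaHat, ← Finset.sum_div]
    rw [← mul_div_assoc]
    congr 1
    simp only [alpha_eq, Phi]
    rw [Finset.sum_comm, Finset.mul_sum]
    apply Finset.sum_congr rfl
    intro r _
    simp only [star_eq_iff_AR k (fun ℓ => nvec_one_le (pad r) t ℓ) ℓ hi]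
    have key : ∀ m, (nvec k (pad r) t = fun i_1 => star i n i_1 - 1 + if i_1 = ℓ then m else 0) ↔
        (nvec k (pad r) t ℓ = m ∧ ∀ ℓ', ℓ' ≠ ℓ → nvec k (pad r) t ℓ' = n ℓ') := by
      intro m
      have hik := ℓ.2
      have e1 : star i n ℓ - 1 = 0 := by
        simp only [star]; rw [if_pos ⟨hi, by omega⟩]
      have e2 : ∀ ℓ', ℓ' ≠ ℓ → star i n ℓ' - 1 = n ℓ' := by
        intro ℓ' hne
        have : (ℓ' : ℕ) ≠ i := fun h' => hne (Fin.ext (by omega))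
        simp only [star]; rw [if_neg (by tauto)]; omega
      constructor
      · intro he
        refine ⟨?_, fun ℓ' hne => ?_⟩
        · rw [he]; simp [e1]
        · rw [he]; simp [e2 _ hne, hne]
      · rintro ⟨ha, hb⟩
        funext ℓ'
        by_cases hl : ℓ' = ℓ
        · rw [hl, ha, e1]; simp
        · rw [hb _ hl, e2 _ hl]; simp [hl]
    simp only [key]
    rw [Finset.sum_eq_single_of_mem (nvec k (pad r) t ℓ)
      (Finset.mem_Icc.2 ⟨nvec_one_le _ _ _, nvec_le _ _ _⟩)]
    · by_cases hc : pad r t = i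
      · simp only [hc, true_and]
        split_ifs
        · ring
        · simp
      · simp [hc]
    · intro b _ hb
      rw [if_neg]
      rintro ⟨-, h', -⟩
      exact hb h'.symm
  · have hi : k ≤ (i : ℕ) := by
      by_contra hne
      apply h
      refine ⟨⟨i, by omega⟩, ?_⟩
      simp only [star]
      rw [if_pos ⟨by simp, by omega⟩]
    have e : (fun ℓ => star i n ℓ - 1) = n := by
      funext ℓ
      simp only [star]; rw [if_neg (by omega)]; omega
    rw [e, Nat.add_sub_cancel]
    simp only [alphaHat, ← mul_div_assoc, ← Finset.sum_div]
    congr 1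
    simp only [alpha_eq, Phi, Finset.mul_sum]
    rw [Finset.sum_comm]
    apply Finset.sum_congr rfl
    intro r _
    simp only [star_eq_iff_not k hn hi]
    rw [Finset.sum_filter]
    rw [Finset.sum_eq_single_of_mem (pad r t) (Finset.mem_univ _)]
    · by_cases h1 : k ≤ (pad r t : ℕ) <;> by_cases h2 : nvec k (pad r) t = n <;>
        simp [h1, h2, mul_comm]
    · intro b _ hb
      simp [hb.symm]

lemma wpath_pos (T t : ℕ) (ht : t ≤ T) (hpi : ∀ i, 0 < pi0 i)
    (hp : ∀ i j, 0 < p i j) (hf0 : ∀ i, 0 < f0 i)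
    (hf : ∀ t, 1 ≤ t → t ≤ T → ∀ (j : Fin M) n, 0 < f t j n) (r : Fin (t + 1) → Fin M) :
    0 < wpath k pi0 p f0 f r := by
  unfold wpath
  refine mul_pos (mul_pos (hpi _) (hf0 _)) (Finset.prod_pos fun s hs => ?_)
  rw [Finset.mem_Icc] at hs
  exact mul_pos (hp _ _) (hf s hs.1 (by omega) _ _)

end

end MRS

open MRS in
/-- The backward recursion for the smoothed probabilities:
`γ^(T)_n(i) = α̂^(T)_n(i)`, and for `t = T-1,…,0`, `n ∈ S^(t)` and `i ∈ S`,
`γ^(t)_n(i) = α̂^(t)_n(i) · ∑_j p_{ij} · γ^(t+1)_{n*}(j) / φ^(t+1)_{n*}(j)`, where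
`n* = n + 1` if `i ∈ S_AR^c` and `n* = n^{(−i)} + 1` if `i ∈ S_AR`. -/
theorem backward_algorithm (M k T : ℕ) (hM : 2 ≤ M) (hk : 1 ≤ k) (hkM : k < M)
    (hT : 1 ≤ T)
    (pi0 : Fin M → ℝ) (p : Fin M → Fin M → ℝ) (f0 : Fin M → ℝ)
    (f : ℕ → Fin M → (Fin k → ℕ) → ℝ)
    (hpi : ∀ i, 0 < pi0 i) (hpisum : ∑ i, pi0 i = 1)
    (hp : ∀ i j, 0 < p i j) (hprow : ∀ i, ∑ j, p i j = 1)
    (hf0 : ∀ i, 0 < f0 i) (hf : ∀ t, 1 ≤ t → t ≤ T → ∀ (j : Fin M) n, 0 < f t j n) :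
    (∀ i : Fin M, ∀ n ∈ Sset k T,
      gamma k pi0 p f0 f T T n i = alphaHat k pi0 p f0 f T n i) ∧
    (∀ t : ℕ, t < T → ∀ n ∈ Sset k t, ∀ i : Fin M,
      gamma k pi0 p f0 f T t n i
        = alphaHat k pi0 p f0 f t n i *
            ∑ j : Fin M,
              p i j *
                (gamma k pi0 p f0 f T (t + 1)
                    (fun ℓ : Fin k =>
                      (if (ℓ : ℕ) = (i : ℕ) ∧ (i : ℕ) < k then 0 else n ℓ) + 1) j /
                  phi k hkM.le pi0 p f0 f (t + 1)
                    (fun ℓ : Fin k =>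
                      (if (ℓ : ℕ) = (i : ℕ) ∧ (i : ℕ) < k then 0 else n ℓ) + 1) j)) := by
  constructor
  · intro i n _
    have h := gamma_eq k pi0 p f0 f T 0 n i
    rw [alphaHat, Asum_eq]
    simpa [K] using h
  · intro t ht n hn i
    have hn1 : ∀ ℓ, 1 ≤ n ℓ := by
      intro ℓ
      unfold Sset at hn
      rw [Finset.mem_filter, Fintype.mem_piFinset] at hn
      exact (Finset.mem_Icc.1 (hn.1 ℓ)).1
    obtain ⟨d, rfl⟩ : ∃ d, T = t + (d + 1) := ⟨T - t - 1, by omega⟩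
    have hw := wpath_pos k pi0 p f0 f (t + (d + 1)) t (by omega) hpi hp hf0 hf
    change _ = _ * ∑ j : Fin M, p i j * (gamma k pi0 p f0 f (t + (d + 1)) (t + 1) (star i n) j /
      phi k hkM.le pi0 p f0 f (t + 1) (star i n) j)
    rw [gamma_eq]
    by_cases ha : alpha k pi0 p f0 f t n i = 0
    · simp [alphaHat, ha]
    obtain ⟨r, hr⟩ : ∃ r : Fin (t + 1) → Fin M, pad r t = i ∧ nvec k (pad r) t = n := by
      by_contra hne
      push Not at hne
      apply ha
      rw [alpha_eq]
      apply Finset.sum_eq_zero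
      intro r _
      rw [if_neg]
      exact fun h => hne r h.1 h.2
    have hA : 0 < Asum k pi0 p f0 f t := by
      rw [Asum_eq]
      exact Finset.sum_pos (fun r _ => hw r) ⟨r, Finset.mem_univ _⟩
    have hPhi : ∀ j, 0 < Phi k pi0 p f0 f t (star i n) j := by
      intro j
      unfold Phi
      apply Finset.sum_pos'
      · intro r _
        split_ifs
        · exact (mul_pos (hw r) (hp _ _)).le
        · exact le_rfl
      · refine ⟨r, Finset.mem_univ _, ?_⟩
        rw [hr.1, hr.2, if_pos rfl]
        exact mul_pos (hw r) (hp _ _)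
    have e : t + (d + 1) = t + 1 + d := by omega
    have hg : ∀ j, gamma k pi0 p f0 f (t + (d + 1)) (t + 1) (star i n) j =
        alpha k pi0 p f0 f (t + 1) (star i n) j * K k p f (fun _ _ => 1) d (t + 1) j (star i n) /
        ∑ r : Fin (t + (d + 1) + 1) → Fin M, wpath k pi0 p f0 f r := by
      intro j
      rw [e]
      exact gamma_eq k pi0 p f0 f (t + 1) d (star i n) j
    simp only [hg, phi_eq k pi0 p f0 f hkM.le t n hn1, alpha_succ, K, Q, alphaHat]
    rw [mul_div_assoc, div_mul_eq_mul_div, mul_div_assoc]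
    congr 1
    rw [Finset.sum_div, Finset.sum_div]
    apply Finset.sum_congr rfl
    intro j _
    have := (hPhi j).ne'
    have := hA.ne'
    field_simp
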